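/- arXiv:2102.11564 — 2 statements merged into one kernel-verified Lean document; each statement's English description precedes it below -/
import Mathlib

section
/- Let f be four times continuously differentiable on [x_1, x_n] with |f⁽⁴⁾(x)| ≤ L for all x, assume ĥ < 1, and suppose there exists K > 0 such that ĥ/h_j ≤ K for all 1 ≤ j ≤ n−1. Let Ḟ = (ḟ_2, …, ḟ_{n−1}) be the (unique) solution of the spline system A·Ḟ = B. Then max_{2≤i≤n−1} |ḟ_i − f'(x_i)| ≤ ((17K + K²)/16 + 1)·L·ĥ³. -/
/-- Mesh spacing `hᵢ = xᵢ₊₁ − xᵢ`. -/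
noncomputable def hstep (x : ℕ → ℝ) (i : ℕ) : ℝ := x (i + 1) - x i

/-- Divided difference `mᵢ = (f(xᵢ₊₁) − f(xᵢ))/hᵢ`. -/
noncomputable def mslope (x : ℕ → ℝ) (f : ℝ → ℝ) (i : ℕ) : ℝ :=
  (f (x (i + 1)) - f (x i)) / (x (i + 1) - x i)

/-- `λᵢ = hᵢ₊₁/(hᵢ + hᵢ₊₁)`. -/
noncomputable def lamb (x : ℕ → ℝ) (i : ℕ) : ℝ :=
  hstep x (i + 1) / (hstep x i + hstep x (i + 1))

/-- `μᵢ = hᵢ/(hᵢ + hᵢ₊₁)`. -/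
noncomputable def mub (x : ℕ → ℝ) (i : ℕ) : ℝ :=
  hstep x i / (hstep x i + hstep x (i + 1))

/-!
On a cell with endpoints `a`, `b` the quantity `3 m - 2 f'(a) - f'(b)`, with `m` the slope of `f`
over the cell, equals `(b - a)/2 * f''(a)` up to `L |b - a|³ / 24`: multiplied by `b - a`, the
difference has as its `b`-derivative twice the error of the trapezoidal rule for `f''`, whose own
second `b`-derivative is `-(b - a) f⁽⁴⁾(b)`, so three integrations starting from `a` give the
bound. In a row of the spline system the weights `λ`, `μ` make the second-derivative terms of the
two adjacent cells cancel, so the exact derivatives satisfy the row up to `L H³ / 24` for every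
bound `H` on the mesh. The error vanishes at both ends of the grid, and each row has diagonal
entry `2` against off-diagonal entries of sum `1`; comparing the row at an index of maximal error
with its neighbours bounds the error by the residual, whatever the mesh ratio.
-/

section Calculus

variable {E : Type*} [NormedAddCommGroup E] [NormedSpace ℝ E] {S : Set ℝ} {a b L : ℝ}

theorem norm_sub_le_of_norm_hasDerivWithinAt_le_pow {F F' : ℝ → E} {C : ℝ} {m : ℕ}
    (hS : StarConvex ℝ a S) (hF : ∀ t ∈ S, HasDerivWithinAt F (F' t) S t)
    (hF' : ∀ t ∈ S, ‖F' t‖ ≤ C * |t - a| ^ m) (hb : b ∈ S) :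
    ‖F b - F a‖ ≤ C / (m + 1) * |b - a| ^ (m + 1) := by
  let γ : ℝ → ℝ := AffineMap.lineMap a b
  have hγ : Set.MapsTo γ (Set.Icc 0 1) S := fun u hu ↦
    hS.segment_subset hb (segment_eq_image_lineMap ℝ a b ▸ Set.mem_image_of_mem _ hu)
  have hderiv : ∀ u ∈ Set.Icc (0 : ℝ) 1,
      HasDerivWithinAt (fun u ↦ F (γ u) - F a) ((b - a) • F' (γ u)) (Set.Icc 0 1) u := fun u hu ↦
    ((hF _ (hγ hu)).scomp u AffineMap.hasDerivWithinAt_lineMap hγ).sub_const _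
  have hbound : ∀ u ∈ Set.Ico (0 : ℝ) 1,
      ‖(b - a) • F' (γ u)‖ ≤ C * |b - a| ^ (m + 1) * u ^ m := fun u hu ↦ by
    have hγu : |γ u - a| = u * |b - a| := by
      simp [γ, AffineMap.lineMap_apply, abs_mul, abs_of_nonneg hu.1]
    calc ‖(b - a) • F' (γ u)‖ = |b - a| * ‖F' (γ u)‖ := norm_smul _ _
      _ ≤ |b - a| * (C * (u * |b - a|) ^ m) := by
          gcongr
          exact hγu ▸ hF' _ (hγ (Set.Ico_subset_Icc_self hu))
      _ = C * |b - a| ^ (m + 1) * u ^ m := by ring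
  have hprimitive : ∀ u : ℝ, HasDerivAt (fun u ↦ C / (m + 1) * |b - a| ^ (m + 1) * u ^ (m + 1))
      (C * |b - a| ^ (m + 1) * u ^ m) u := fun u ↦ by
    refine ((hasDerivAt_pow (m + 1) u).const_mul _).congr_deriv ?_
    push_cast [Nat.add_sub_cancel]
    field_simp
  have h := image_norm_le_of_norm_deriv_right_le_deriv_boundary
    (fun u hu ↦ (hderiv u hu).continuousWithinAt)
    (fun u hu ↦ (hderiv u (Set.Ico_subset_Icc_self hu)).mono_of_mem_nhdsWithin
      (Icc_mem_nhdsGE_of_mem hu))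
    (by simp [γ]) hprimitive hbound (Set.right_mem_Icc.2 zero_le_one)
  simpa [γ] using h

theorem norm_trapezoid_error_le {g g₁ g₂ g₃ : ℝ → E} (hS : StarConvex ℝ a S)
    (hg : ∀ t ∈ S, HasDerivWithinAt g (g₁ t) S t)
    (hg₁ : ∀ t ∈ S, HasDerivWithinAt g₁ (g₂ t) S t)
    (hg₂ : ∀ t ∈ S, HasDerivWithinAt g₂ (g₃ t) S t)
    (hL : ∀ t ∈ S, ‖g₃ t‖ ≤ L) (hb : b ∈ S) :
    ‖(2 : ℝ) • (g b - g a) - (b - a) • (g₁ a + g₁ b)‖ ≤ L / 6 * |b - a| ^ 3 := by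
  have hid : ∀ t, HasDerivWithinAt (fun t ↦ t - a) 1 S t := fun t ↦
    (hasDerivWithinAt_id t S).sub_const a
  have hderiv_error : ∀ t ∈ S, ‖g₁ t - g₁ a - (t - a) • g₂ t‖ ≤ L / 2 * |t - a| ^ 2 := by
    intro t ht
    have h := norm_sub_le_of_norm_hasDerivWithinAt_le_pow (m := 1) (C := L) hS
      (F := fun t ↦ g₁ t - g₁ a - (t - a) • g₂ t) (F' := fun t ↦ -((t - a) • g₃ t))
      (fun t ht ↦ (((hg₁ t ht).sub_const _).sub ((hid t).smul (hg₂ t ht))).congr_deriv (by module))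
      (fun t ht ↦ by
        rw [norm_neg, norm_smul, Real.norm_eq_abs, pow_one, mul_comm]
        gcongr
        exact hL t ht) ht
    simp only [sub_self, zero_smul, sub_zero] at h
    exact h.trans_eq (by norm_num)
  have h := norm_sub_le_of_norm_hasDerivWithinAt_le_pow (m := 2) hS
    (F := fun t ↦ (2 : ℝ) • (g t - g a) - (t - a) • (g₁ a + g₁ t))
    (F' := fun t ↦ g₁ t - g₁ a - (t - a) • g₂ t)
    (fun t ht ↦ ((((hg t ht).sub_const _).const_smul (2 : ℝ)).sub
      ((hid t).smul ((hg₁ t ht).const_add _))).congr_deriv (by module))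
    hderiv_error hb
  simp only [sub_self, smul_zero, zero_smul, sub_zero] at h
  exact h.trans_eq (by push_cast; ring)

theorem norm_three_smul_slope_sub_le {f f₁ f₂ f₃ f₄ : ℝ → E} (hS : StarConvex ℝ a S)
    (hf : ∀ t ∈ S, HasDerivWithinAt f (f₁ t) S t)
    (hf₁ : ∀ t ∈ S, HasDerivWithinAt f₁ (f₂ t) S t)
    (hf₂ : ∀ t ∈ S, HasDerivWithinAt f₂ (f₃ t) S t)
    (hf₃ : ∀ t ∈ S, HasDerivWithinAt f₃ (f₄ t) S t)
    (hL : ∀ t ∈ S, ‖f₄ t‖ ≤ L) (hb : b ∈ S) (hab : a ≠ b) :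
    ‖(3 : ℝ) • slope f a b - (2 : ℝ) • f₁ a - f₁ b - ((b - a) / 2) • f₂ a‖
      ≤ L / 24 * |b - a| ^ 3 := by
  let Φ : ℝ → E := fun t ↦ (3 : ℝ) • (f t - f a) - (t - a) • ((2 : ℝ) • f₁ a + f₁ t)
    - ((t - a) ^ 2 / 2) • f₂ a
  have hΦ : ∀ t ∈ S, HasDerivWithinAt Φ
      ((2 : ℝ) • (f₁ t - f₁ a) - (t - a) • (f₂ a + f₂ t)) S t := fun t ht ↦ by
    have hid : HasDerivWithinAt (fun t ↦ t - a) 1 S t := (hasDerivWithinAt_id t S).sub_const a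
    refine (((((hf t ht).sub_const _).const_smul (3 : ℝ)).sub
      (hid.smul ((hf₁ t ht).const_add _))).sub
      (((hid.pow 2).div_const 2).smul_const (f₂ a))).congr_deriv ?_
    simp only [Nat.add_one_sub_one, pow_one, Nat.cast_ofNat, mul_one]
    module
  have hΦb : ‖Φ b‖ ≤ L / 24 * |b - a| ^ 4 := by
    have h := norm_sub_le_of_norm_hasDerivWithinAt_le_pow (m := 3) hS hΦ
      (fun t ht ↦ norm_trapezoid_error_le hS hf₁ hf₂ hf₃ hL ht) hb
    simp only [show Φ a = 0 by simp [Φ], sub_zero] at h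
    exact h.trans_eq (by push_cast; ring)
  have hscale : Φ b
      = (b - a) • ((3 : ℝ) • slope f a b - (2 : ℝ) • f₁ a - f₁ b - ((b - a) / 2) • f₂ a) := by
    have h : (b - a) • slope f a b = f b - f a := sub_smul_slope f a b
    simp only [Φ, ← h]
    module
  have hpos : 0 < |b - a| := abs_pos.2 (sub_ne_zero.2 hab.symm)
  rw [hscale, norm_smul, Real.norm_eq_abs] at hΦb
  refine le_of_mul_le_mul_left (hΦb.trans_eq ?_) hpos
  ring

end Calculus

theorem norm_le_of_tridiagonal_dominant {𝕜 E : Type*} [NormedField 𝕜] [SeminormedAddCommGroup E]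
    [NormedSpace 𝕜 E] {a b : ℕ} {l d u : ℕ → 𝕜} {e : ℕ → E} {C : ℝ}
    (ha : ‖e a‖ ≤ C) (hb : ‖e b‖ ≤ C)
    (hdom : ∀ j, a ≤ j → j + 2 ≤ b → ‖l j‖ + ‖u j‖ + 1 ≤ ‖d j‖)
    (hrow : ∀ j, a ≤ j → j + 2 ≤ b → ‖l j • e j + d j • e (j + 1) + u j • e (j + 2)‖ ≤ C)
    {i : ℕ} (hi : i ∈ Finset.Icc a b) : ‖e i‖ ≤ C := by
  obtain ⟨p, hp, hmax⟩ := (Finset.Icc a b).exists_max_image (fun j ↦ ‖e j‖) ⟨i, hi⟩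
  refine (hmax i hi).trans ?_
  rw [Finset.mem_Icc] at hp
  obtain rfl | hap := hp.1.eq_or_lt
  · exact ha
  obtain rfl | hpb := hp.2.eq_or_lt
  · exact hb
  obtain ⟨j, rfl⟩ : ∃ j, p = j + 1 := Nat.exists_eq_add_one.2 (by lia)
  have hleft : ‖l j • e j‖ ≤ ‖l j‖ * ‖e (j + 1)‖ := by
    rw [norm_smul]
    gcongr
    exact hmax j (Finset.mem_Icc.2 (by lia))
  have hright : ‖u j • e (j + 2)‖ ≤ ‖u j‖ * ‖e (j + 1)‖ := by
    rw [norm_smul]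
    gcongr
    exact hmax (j + 2) (Finset.mem_Icc.2 (by lia))
  have hdiag : ‖d j‖ * ‖e (j + 1)‖ ≤ C + ‖l j‖ * ‖e (j + 1)‖ + ‖u j‖ * ‖e (j + 1)‖ :=
    calc ‖d j‖ * ‖e (j + 1)‖
        = ‖l j • e j + d j • e (j + 1) + u j • e (j + 2) - l j • e j - u j • e (j + 2)‖ := by
          rw [← norm_smul]
          congr 1
          abel
      _ ≤ ‖l j • e j + d j • e (j + 1) + u j • e (j + 2)‖ + ‖l j • e j‖ + ‖u j • e (j + 2)‖ :=
          (norm_sub_le _ _).trans (by gcongr; exact norm_sub_le _ _)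
      _ ≤ _ := by
          gcongr
          exact hrow j (by lia) (by lia)
  have hdom_mul : (‖l j‖ + ‖u j‖ + 1) * ‖e (j + 1)‖ ≤ ‖d j‖ * ‖e (j + 1)‖ := by
    gcongr
    exact hdom j (by lia) (by lia)
  linarith

theorem hasDerivWithinAt_iteratedDerivWithin {𝕜 E : Type*} [NontriviallyNormedField 𝕜]
    [NormedAddCommGroup E] [NormedSpace 𝕜 E] {f : 𝕜 → E} {S : Set 𝕜} {k : WithTop ℕ∞} {m : ℕ}
    (hf : ContDiffOn 𝕜 k f S) (hS : UniqueDiffOn 𝕜 S) (hm : m < k) {t : 𝕜} (ht : t ∈ S) :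
    HasDerivWithinAt (iteratedDerivWithin m f S) (iteratedDerivWithin (m + 1) f S t) S t := by
  rw [iteratedDerivWithin_succ]
  exact (hf.differentiableOn_iteratedDerivWithin hm hS t ht).hasDerivWithinAt

section SplineRow

variable {x : ℕ → ℝ} {i : ℕ}

theorem lamb_nonneg (h : 0 ≤ hstep x i) (h' : 0 ≤ hstep x (i + 1)) : 0 ≤ lamb x i :=
  div_nonneg h' (add_nonneg h h')

theorem mub_nonneg (h : 0 ≤ hstep x i) (h' : 0 ≤ hstep x (i + 1)) : 0 ≤ mub x i :=
  div_nonneg h (add_nonneg h h')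

theorem lamb_add_mub (h : hstep x i + hstep x (i + 1) ≠ 0) : lamb x i + mub x i = 1 := by
  rw [lamb, mub, ← add_div, add_comm, div_self h]

theorem lamb_mul_hstep (x : ℕ → ℝ) (i : ℕ) :
    lamb x i * hstep x i = mub x i * hstep x (i + 1) := by
  rw [lamb, mub]
  ring

theorem mslope_eq_slope (x : ℕ → ℝ) (f : ℝ → ℝ) (i : ℕ) :
    mslope x f i = slope f (x i) (x (i + 1)) :=
  (slope_def_field f _ _).symm

theorem abs_spline_row_residual_le {f f₁ f₂ f₃ f₄ : ℝ → ℝ} {S : Set ℝ} {L H : ℝ}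
    (hS : StarConvex ℝ (x (i + 1)) S) (hleft : x i ∈ S) (hright : x (i + 2) ∈ S)
    (hf : ∀ t ∈ S, HasDerivWithinAt f (f₁ t) S t)
    (hf₁ : ∀ t ∈ S, HasDerivWithinAt f₁ (f₂ t) S t)
    (hf₂ : ∀ t ∈ S, HasDerivWithinAt f₂ (f₃ t) S t)
    (hf₃ : ∀ t ∈ S, HasDerivWithinAt f₃ (f₄ t) S t)
    (hL : ∀ t ∈ S, |f₄ t| ≤ L)
    (hpos : 0 < hstep x i) (hpos' : 0 < hstep x (i + 1))
    (hH : hstep x i ≤ H) (hH' : hstep x (i + 1) ≤ H) :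
    |lamb x i * f₁ (x i) + 2 * f₁ (x (i + 1)) + mub x i * f₁ (x (i + 2))
      - 3 * (lamb x i * mslope x f i + mub x i * mslope x f (i + 1))| ≤ L / 24 * H ^ 3 := by
  let cellError : ℝ → ℝ := fun b ↦
    3 * slope f (x (i + 1)) b - 2 * f₁ (x (i + 1)) - f₁ b - (b - x (i + 1)) / 2 * f₂ (x (i + 1))
  have hL₀ : 0 ≤ L := (abs_nonneg _).trans (hL _ hleft)
  have hcell : ∀ b ∈ S, x (i + 1) ≠ b → |b - x (i + 1)| ≤ H →
      cellError b ∈ Metric.closedBall 0 (L / 24 * H ^ 3) := fun b hb hne hbH ↦ by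
    rw [mem_closedBall_zero_iff]
    exact (norm_three_smul_slope_sub_le hS hf hf₁ hf₂ hf₃ hL hb hne).trans (by gcongr)
  have hcell_left := hcell (x i) hleft (sub_pos.1 hpos).ne'
    (by rwa [abs_sub_comm, ← hstep, abs_of_pos hpos])
  have hcell_right := hcell (x (i + 2)) hright (sub_pos.1 hpos').ne
    (by rwa [← hstep, abs_of_pos hpos'])
  have hweights : lamb x i + mub x i = 1 := lamb_add_mub (add_pos hpos hpos').ne'
  have hmean := convex_closedBall (0 : ℝ) (L / 24 * H ^ 3) hcell_left hcell_right
    (lamb_nonneg hpos.le hpos'.le) (mub_nonneg hpos.le hpos'.le) hweights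
  have hcancel : lamb x i * (x (i + 1) - x i) = mub x i * (x (i + 2) - x (i + 1)) :=
    lamb_mul_hstep x i
  rw [mem_closedBall_zero_iff, Real.norm_eq_abs, ← abs_neg] at hmean
  convert hmean using 2
  simp only [cellError, smul_eq_mul, mslope_eq_slope, slope_comm f (x (i + 1)) (x i)]
  linear_combination (-2 * f₁ (x (i + 1))) * hweights + (f₂ (x (i + 1)) / 2) * hcancel

theorem abs_spline_row_residual_le_of_contDiffOn {f : ℝ → ℝ} {S : Set ℝ} {L H : ℝ}
    (hS : StarConvex ℝ (x (i + 1)) S) (hunique : UniqueDiffOn ℝ S)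
    (hleft : x i ∈ S) (hright : x (i + 2) ∈ S) (hf : ContDiffOn ℝ 4 f S)
    (hL : ∀ t ∈ S, |iteratedDerivWithin 4 f S t| ≤ L)
    (hpos : 0 < hstep x i) (hpos' : 0 < hstep x (i + 1))
    (hH : hstep x i ≤ H) (hH' : hstep x (i + 1) ≤ H) :
    |lamb x i * derivWithin f S (x i) + 2 * derivWithin f S (x (i + 1))
      + mub x i * derivWithin f S (x (i + 2))
      - 3 * (lamb x i * mslope x f i + mub x i * mslope x f (i + 1))| ≤ L / 24 * H ^ 3 := by
  have hderiv (m : ℕ) (hm : m < (4 : WithTop ℕ∞)) : ∀ t ∈ S, HasDerivWithinAt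
      (iteratedDerivWithin m f S) (iteratedDerivWithin (m + 1) f S t) S t := fun t ht ↦
    hasDerivWithinAt_iteratedDerivWithin hf hunique hm ht
  have hf₀ := hderiv 0 (by norm_num)
  have hf₁ := hderiv 1 (by norm_num)
  simp only [zero_add, iteratedDerivWithin_zero, iteratedDerivWithin_one] at hf₀ hf₁
  exact abs_spline_row_residual_le hS hleft hright hf₀ hf₁ (hderiv 2 (by norm_num))
    (hderiv 3 (by norm_num)) hL hpos hpos' hH hH'

end SplineRow

theorem spline_derivatives_third_order_general {n : ℕ} {x : ℕ → ℝ} {f : ℝ → ℝ} {df : ℕ → ℝ}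
    {L H : ℝ} (hx : ∀ i, 1 ≤ i → i ≤ n - 1 → x i < x (i + 1))
    (hf : ContDiffOn ℝ 4 f (Set.Icc (x 1) (x n)))
    (hL : ∀ t ∈ Set.Icc (x 1) (x n),
      |iteratedDerivWithin 4 f (Set.Icc (x 1) (x n)) t| ≤ L)
    (hH : ∀ i, 1 ≤ i → i ≤ n - 1 → hstep x i ≤ H)
    (hdf_left : df 1 = derivWithin f (Set.Icc (x 1) (x n)) (x 1))
    (hdf_right : df n = derivWithin f (Set.Icc (x 1) (x n)) (x n))
    (hsys : ∀ j, 2 ≤ j → j ≤ n - 1 →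
      lamb x (j - 1) * df (j - 1) + 2 * df j + mub x (j - 1) * df (j + 1)
        = 3 * (lamb x (j - 1) * mslope x f (j - 1) + mub x (j - 1) * mslope x f j))
    {i : ℕ} (hi : 2 ≤ i) (hin : i ≤ n - 1) :
    |df i - derivWithin f (Set.Icc (x 1) (x n)) (x i)| ≤ L / 24 * H ^ 3 := by
  set S := Set.Icc (x 1) (x n)
  have hmono : StrictMonoOn x (Set.Icc 1 n) :=
    strictMonoOn_of_lt_add_one Set.ordConnected_Icc fun j _ hj hj' ↦ hx j hj.1 (by grind)
  have hnode : ∀ j, 1 ≤ j → j ≤ n → x j ∈ S := fun j hj hjn ↦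
    hmono.monotoneOn.mapsTo_Icc ⟨hj, hjn⟩
  have hpos : ∀ j, 1 ≤ j → j + 1 ≤ n → 0 < hstep x j := fun j hj hjn ↦
    sub_pos.2 (hx j hj (by lia))
  have hS : UniqueDiffOn ℝ S := uniqueDiffOn_Icc (hmono (by grind) (by grind) (by lia))
  have hresidual : ∀ j, 1 ≤ j → j + 2 ≤ n →
      |lamb x j * derivWithin f S (x j) + 2 * derivWithin f S (x (j + 1))
        + mub x j * derivWithin f S (x (j + 2))
        - 3 * (lamb x j * mslope x f j + mub x j * mslope x f (j + 1))| ≤ L / 24 * H ^ 3 :=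
    fun j hj hjn ↦ abs_spline_row_residual_le_of_contDiffOn
      ((convex_Icc _ _).starConvex (hnode _ (by lia) (by lia))) hS
      (hnode _ hj (by lia)) (hnode _ (by lia) hjn) hf hL
      (hpos _ hj (by lia)) (hpos _ (by lia) hjn) (hH _ hj (by lia)) (hH _ (by lia) (by lia))
  have hbound_nonneg : 0 ≤ L / 24 * H ^ 3 := (abs_nonneg _).trans (hresidual 1 le_rfl (by lia))
  refine norm_le_of_tridiagonal_dominant (a := 1) (b := n) (l := lamb x) (d := fun _ ↦ 2)
    (u := mub x) (e := fun j ↦ df j - derivWithin f S (x j))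
    (by simpa [hdf_left]) (by simpa [hdf_right]) (fun j hj hjn ↦ ?_) (fun j hj hjn ↦ ?_)
    (Finset.mem_Icc.2 (by lia))
  · have h := hpos j hj (by lia)
    have h' := hpos (j + 1) (by lia) hjn
    rw [Real.norm_of_nonneg (lamb_nonneg h.le h'.le), Real.norm_of_nonneg (mub_nonneg h.le h'.le),
      lamb_add_mub (add_pos h h').ne']
    norm_num
  · have hrow := hsys (j + 1) (by lia) (by lia)
    rw [Nat.add_sub_cancel] at hrow
    have h := hresidual j hj hjn
    rw [← hrow, abs_sub_comm] at h
    refine (congrArg abs ?_).trans_le h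
    simp only [smul_eq_mul]
    ring

/-- Third-order accuracy of the derivative values computed from the spline
system `A·Ḟ = B` (written row-wise: `λⱼ₋₁ḟⱼ₋₁ + 2ḟⱼ + μⱼ₋₁ḟⱼ₊₁ =
3(λⱼ₋₁mⱼ₋₁ + μⱼ₋₁mⱼ)` for `2 ≤ j ≤ n−1`, with `ḟ₁ = f'(x₁)`, `ḟₙ = f'(xₙ)`):
`max_{2≤i≤n−1} |ḟᵢ − f'(xᵢ)| ≤ ((17K + K²)/16 + 1)·L·ĥ³`. -/
theorem spline_derivatives_third_order (n : ℕ) (x : ℕ → ℝ) (f : ℝ → ℝ)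
    (df : ℕ → ℝ) (L K hhat : ℝ) (hn : 3 ≤ n)
    (hx : ∀ i, 1 ≤ i → i ≤ n - 1 → x i < x (i + 1))
    (hf : ContDiffOn ℝ 4 f (Set.Icc (x 1) (x n)))
    (hL : 0 < L)
    (hLb : ∀ t ∈ Set.Icc (x 1) (x n),
      |iteratedDerivWithin 4 f (Set.Icc (x 1) (x n)) t| ≤ L)
    (hhat1 : hhat < 1)
    (hub : ∀ i, 1 ≤ i → i ≤ n - 1 → hstep x i ≤ hhat)
    (hach : ∃ i, 1 ≤ i ∧ i ≤ n - 1 ∧ hhat = hstep x i)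
    (hK : 0 < K)
    (hKb : ∀ j, 1 ≤ j → j ≤ n - 1 → hhat / hstep x j ≤ K)
    (hdf1 : df 1 = derivWithin f (Set.Icc (x 1) (x n)) (x 1))
    (hdfn : df n = derivWithin f (Set.Icc (x 1) (x n)) (x n))
    (hsys : ∀ j, 2 ≤ j → j ≤ n - 1 →
      lamb x (j - 1) * df (j - 1) + 2 * df j + mub x (j - 1) * df (j + 1)
        = 3 * (lamb x (j - 1) * mslope x f (j - 1) + mub x (j - 1) * mslope x f j)) :
    ∀ i, 2 ≤ i → i ≤ n - 1 →
      |df i - derivWithin f (Set.Icc (x 1) (x n)) (x i)|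
        ≤ ((17 * K + K ^ 2) / 16 + 1) * L * hhat ^ 3 := by
  intro i hi hin
  have h := spline_derivatives_third_order_general hx hf hLb hub hdf1 hdfn hsys hi hin
  have hnonneg : 0 ≤ L * hhat ^ 3 := by linarith [(abs_nonneg _).trans h]
  have hratio_nonneg : 0 ≤ (17 * K + K ^ 2) / 16 * (L * hhat ^ 3) := by positivity
  linarith
end

section
/- Let x_1 < … < x_n with nondecreasing data f_1 ≤ … ≤ f_n such that m_i > 0 for all 1 ≤ i ≤ n−1, and for 2 ≤ i ≤ n−1 let ḟ_i = ḟ_i^{B} = (wl_i + wr_i)·m_{i−1}·m_i/(wl_i·m_i + wr_i·m_{i−1}) with wl_i = h_{i−1} + 2·h_i, wr_i = 2·h_{i−1} + h_i (Brodlie's formula). Then: (a) 0 < ḟ_i^{B} and ḟ_i^{B} ≤ 3·min(m_{i−1}, m_i) for every 2 ≤ i ≤ n−1; consequently, for every 2 ≤ i ≤ n−2 the cubic Hermite interpolant on [x_i, x_{i+1}] of (f_i, ḟ_i), (f_{i+1}, ḟ_{i+1}) is nondecreasing; (b) if the data come from a function f that is three times continuously differentiable on [x_1, x_n] with f'(x)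 ≥ δ > 0 there, and the grid is uniform (h_i = h for all i), then the piecewise cubic Hermite interpolant built from these derivative values approximates f with third-order accuracy, i.e. there is a constant C depending only on δ and on bounds of the derivatives of f such that sup_{x∈[x_i,x_{i+1}]} |P_i(x) − f(x)| ≤ C·h³ for 2 ≤ i ≤ n−2 (and with second-order accuracy C·ĥ² on non-uniform grids). -/
/-- The cubic Hermite interpolant on `[xi, xip]` of the data
`(fi, di)`, `(fip, dip)`. -/
noncomputable def hermite (xi xip fi fip di dip : ℝ) : ℝ → ℝ := fun t =>
  fi + di * (t - xi)
    + (((fip - fi) / (xip - xi) - di) / (xip - xi)) * (t - xi) ^ 2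
    + ((dip + di - 2 * ((fip - fi) / (xip - xi))) / (xip - xi) ^ 2)
        * (t - xi) ^ 2 * (t - xip)

/-- Brodlie's derivative value: `ḟᵢ^B = (wl + wr)·mᵢ₋₁·mᵢ/(wl·mᵢ + wr·mᵢ₋₁)`
with `wl = hᵢ₋₁ + 2hᵢ`, `wr = 2hᵢ₋₁ + hᵢ`. -/
noncomputable def brodlie (hm hi mm mi : ℝ) : ℝ :=
  ((hm + 2 * hi) + (2 * hm + hi)) * mm * mi / ((hm + 2 * hi) * mi + (2 * hm + hi) * mm)

/-!
Brodlie's value is a weighted harmonic mean of the two neighbouring secant slopes: it lies between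
them and never exceeds three times the smaller one, which is the Fritsch–Carlson condition for a
monotone Hermite cubic.

For accuracy, a Hermite cubic on `[a, b]` with secant slope `m` degenerates to the quadratic through
its end values when its derivative values are `d` and `2 * m - d`, and it depends Lipschitz
continuously on them. Second order follows by comparison with the chord (`d = m`), since both
derivative values are `O(ĥ)`-close to `m`. Third order follows by comparison with the quadratic of
slope `d = f' a`: on a uniform grid Brodlie's value is the arithmetic mean of the two slopes, which
is `O(h²)`-close to `f'`, minus `(u - v)² / (2 (u + v))`, which is `O(h²)` because `u, v ≥ δ > 0`.
-/

open Set
open scoped NNReal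

section Brodlie

variable {p q u v : ℝ}

lemma brodlie_comm : brodlie p q u v = brodlie q p v u := by
  unfold brodlie
  congr 1 <;> ring

lemma brodlie_pos (hp : 0 < p) (hq : 0 < q) (hu : 0 < u) (hv : 0 < v) : 0 < brodlie p q u v := by
  unfold brodlie
  positivity

lemma brodlie_le_three_mul_left (hp : 0 < p) (hq : 0 < q) (hu : 0 < u) (hv : 0 < v) :
    brodlie p q u v ≤ 3 * u := by
  rw [brodlie, div_le_iff₀ (by positivity)]
  have : 0 ≤ 3 * u * (q * v + (2 * p + q) * u) := by positivity
  linarith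

lemma brodlie_le_three_mul_min (hp : 0 < p) (hq : 0 < q) (hu : 0 < u) (hv : 0 < v) :
    brodlie p q u v ≤ 3 * min u v := by
  rw [mul_min_of_nonneg _ _ zero_le_three]
  exact le_min (brodlie_le_three_mul_left hp hq hu hv)
    (brodlie_comm.trans_le (brodlie_le_three_mul_left hq hp hv hu))

lemma brodlie_mem_uIcc (hp : 0 < p) (hq : 0 < q) (hu : 0 < u) (hv : 0 < v) :
    brodlie p q u v ∈ uIcc u v := by
  have split : (p + 2 * q + (2 * p + q)) * u * v
      = (p + 2 * q) * v * u + (2 * p + q) * u * v := by ring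
  rw [brodlie, split]
  constructor
  · rw [le_div_iff₀ (by positivity), mul_comm (u ⊓ v), add_mul ((p + 2 * q) * v)]
    gcongr
    exacts [inf_le_left, inf_le_right]
  · rw [div_le_iff₀ (by positivity), mul_comm (u ⊔ v), add_mul ((p + 2 * q) * v)]
    gcongr
    exacts [le_sup_left, le_sup_right]

lemma brodlie_self (hp : p ≠ 0) (huv : u + v ≠ 0) :
    brodlie p p u v = (u + v) / 2 - (u - v) ^ 2 / (2 * (u + v)) := by
  have hden : (p + 2 * p) * v + (2 * p + p) * u = 3 * p * (u + v) := by ring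
  rw [brodlie, hden]
  field_simp
  ring

lemma abs_brodlie_self_sub_avg_le {δ : ℝ} (hp : p ≠ 0) (hδ : 0 < δ) (hu : δ ≤ u) (hv : δ ≤ v) :
    |brodlie p p u v - (u + v) / 2| ≤ (u - v) ^ 2 / (4 * δ) := by
  have huv : 0 < u + v := by linarith
  rw [brodlie_self hp huv.ne', sub_sub_cancel_left, abs_neg, abs_of_nonneg (by positivity)]
  exact div_le_div_of_nonneg_left (sq_nonneg _) (by positivity) (by linarith)

end Brodlie

section Hermite

variable {a b fa fb d e d' e' t ε : ℝ}

lemma hasDerivAt_hermite (hab : a ≠ b) (t : ℝ) :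
    HasDerivAt (hermite a b fa fb d e)
      (d * ((1 - (t - a) / (b - a)) * (1 - 3 * ((t - a) / (b - a))))
        + e * ((t - a) / (b - a) * (3 * ((t - a) / (b - a)) - 2))
        + 6 * ((fb - fa) / (b - a)) * ((t - a) / (b - a) * (1 - (t - a) / (b - a)))) t := by
  have hba : b - a ≠ 0 := sub_ne_zero.mpr hab.symm
  have hta : HasDerivAt (fun t : ℝ => t - a) 1 t := (hasDerivAt_id t).sub_const a
  have htb : HasDerivAt (fun t : ℝ => t - b) 1 t := (hasDerivAt_id t).sub_const b
  refine ((((hta.const_mul d).const_add fa).add ((hta.pow 2).const_mul _)).add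
    (((hta.pow 2).const_mul _).mul htb)).congr_deriv ?_
  simp only [Pi.pow_apply, Nat.cast_ofNat, Nat.add_one_sub_one, pow_one, mul_one]
  field_simp
  ring

-- Affine in `d` and in `e`, so only the four vertices of the square `[0, 3m]²` matter; there the
-- expression is `6ms(1-s)`, `3m(1-s)²`, `3ms²` and `3m(2s-1)²`.
lemma hermite_deriv_nonneg {m s : ℝ} (hd : d ∈ Icc 0 (3 * m)) (he : e ∈ Icc 0 (3 * m))
    (hs : s ∈ Icc (0 : ℝ) 1) :
    0 ≤ d * ((1 - s) * (1 - 3 * s)) + e * (s * (3 * s - 2)) + 6 * m * (s * (1 - s)) := by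
  have hm : 0 ≤ m := by linarith [hd.1, hd.2]
  have vertex_le : ∀ {r : ℝ} (k : ℝ), r ∈ Icc 0 (3 * m) → 0 ≤ r * k ∨ 3 * m * k ≤ r * k := by
    intro r k hr
    exact (le_total 0 k).imp (mul_nonneg hr.1) (mul_le_mul_of_nonpos_right hr.2)
  have h00 : 0 ≤ m * (s * (1 - s)) := mul_nonneg hm (mul_nonneg hs.1 (sub_nonneg.mpr hs.2))
  have h10 : 0 ≤ m * (1 - s) ^ 2 := by positivity
  have h01 : 0 ≤ m * s ^ 2 := by positivity
  have h11 : 0 ≤ m * (2 * s - 1) ^ 2 := by positivity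
  rcases vertex_le ((1 - s) * (1 - 3 * s)) hd with hd | hd <;>
    rcases vertex_le (s * (3 * s - 2)) he with he | he <;>
    linarith

lemma sub_div_sub_mem_Icc_zero_one (ht : t ∈ Icc a b) : (t - a) / (b - a) ∈ Icc (0 : ℝ) 1 :=
  ⟨div_nonneg (sub_nonneg.mpr ht.1) (sub_nonneg.mpr (ht.1.trans ht.2)),
    div_le_one_of_le₀ (sub_le_sub_right ht.2 a) (sub_nonneg.mpr (ht.1.trans ht.2))⟩

theorem monotoneOn_hermite (hab : a < b) (hd : d ∈ Icc 0 (3 * ((fb - fa) / (b - a))))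
    (he : e ∈ Icc 0 (3 * ((fb - fa) / (b - a)))) :
    MonotoneOn (hermite a b fa fb d e) (Icc a b) := by
  have hderiv := fun t => hasDerivAt_hermite (fa := fa) (fb := fb) (d := d) (e := e) hab.ne t
  refine monotoneOn_of_hasDerivWithinAt_nonneg (convex_Icc a b)
    (fun t _ => (hderiv t).continuousAt.continuousWithinAt)
    (fun t _ => (hderiv t).hasDerivWithinAt) fun t ht => ?_
  exact hermite_deriv_nonneg hd he (sub_div_sub_mem_Icc_zero_one (interior_subset ht))

lemma hermite_eq_quadratic (a b fa fb d t : ℝ) :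
    hermite a b fa fb d (2 * ((fb - fa) / (b - a)) - d) t
      = fa + d * (t - a) + ((fb - fa) / (b - a) - d) / (b - a) * (t - a) ^ 2 := by
  simp [hermite]

lemma hermite_sub_hermite (hab : a ≠ b) (d e d' e' t : ℝ) :
    hermite a b fa fb d e t - hermite a b fa fb d' e' t
      = (b - a) * ((d - d') * ((t - a) / (b - a) * (1 - (t - a) / (b - a)) ^ 2)
        - (e - e') * (((t - a) / (b - a)) ^ 2 * (1 - (t - a) / (b - a)))) := by
  have hba : b - a ≠ 0 := sub_ne_zero.mpr hab.symm
  unfold hermite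
  field_simp
  ring

lemma abs_hermite_sub_hermite_le (hab : a < b) (ht : t ∈ Icc a b) (hd : |d - d'| ≤ ε)
    (he : |e - e'| ≤ ε) :
    |hermite a b fa fb d e t - hermite a b fa fb d' e' t| ≤ ε * (b - a) / 4 := by
  have hba : 0 < b - a := sub_pos.mpr hab
  have hε : 0 ≤ ε := (abs_nonneg _).trans hd
  obtain ⟨hs0, hs1⟩ := sub_div_sub_mem_Icc_zero_one ht
  rw [hermite_sub_hermite hab.ne, abs_mul, abs_of_pos hba]
  generalize (t - a) / (b - a) = s at hs0 hs1 ⊢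
  have : 0 ≤ 1 - s := sub_nonneg.mpr hs1
  have hbasis : |(d - d') * (s * (1 - s) ^ 2) - (e - e') * (s ^ 2 * (1 - s))| ≤ ε / 4 :=
    calc
      _ ≤ |(d - d') * (s * (1 - s) ^ 2)| + |(e - e') * (s ^ 2 * (1 - s))| := abs_sub _ _
      _ = |d - d'| * (s * (1 - s) ^ 2) + |e - e'| * (s ^ 2 * (1 - s)) := by
        rw [abs_mul (d - d'), abs_mul (e - e'),
          abs_of_nonneg (by positivity : 0 ≤ s * (1 - s) ^ 2),
          abs_of_nonneg (by positivity : 0 ≤ s ^ 2 * (1 - s))]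
      _ ≤ ε * (s * (1 - s) ^ 2) + ε * (s ^ 2 * (1 - s)) := by gcongr
      _ ≤ ε / 4 := by nlinarith [mul_nonneg hε (sq_nonneg (2 * s - 1))]
  calc
    _ ≤ (b - a) * (ε / 4) := by gcongr
    _ = ε * (b - a) / 4 := by ring

end Hermite

section Taylor

variable {f f' f'' g g' : ℝ → ℝ} {s : Set ℝ} [s.OrdConnected] {a b c p q p' q' r : ℝ} {K : ℝ≥0}

lemma abs_sub_sub_sub_le_of_abs_deriv_sub_le (hf : ∀ t ∈ s, HasDerivWithinAt f (f' t) s t)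
    (hg : ∀ t ∈ s, HasDerivWithinAt g (g' t) s t) (ha : a ∈ s) (hb : b ∈ s)
    (hr : ∀ t ∈ uIcc a b, |f' t - g' t| ≤ r) : |f b - g b - (f a - g a)| ≤ r * |b - a| := by
  have hsub : uIcc a b ⊆ s := OrdConnected.uIcc_subset ‹_› ha hb
  exact (convex_uIcc a b).norm_image_sub_le_of_norm_hasDerivWithin_le
    (fun t ht => ((hf t (hsub ht)).sub (hg t (hsub ht))).mono hsub) hr left_mem_uIcc right_mem_uIcc

lemma abs_sub_taylor_one_le (hf : ∀ t ∈ s, HasDerivWithinAt f (f' t) s t)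
    (hf' : LipschitzOnWith K f' s) (ha : a ∈ s) (hb : b ∈ s) :
    |f b - f a - f' a * (b - a)| ≤ K * |b - a| ^ 2 := by
  have hlin : ∀ t ∈ s, HasDerivWithinAt (fun t => f' a * (t - a)) (f' a) s t := fun t _ => by
    simpa using ((hasDerivWithinAt_id t s).sub_const a).const_mul (f' a)
  have key := abs_sub_sub_sub_le_of_abs_deriv_sub_le (r := K * |b - a|) hf hlin ha hb
    fun t ht => (hf'.dist_le_mul t (OrdConnected.uIcc_subset ‹_› ha hb ht) a ha).trans
      (mul_le_mul_of_nonneg_left (abs_sub_left_of_mem_uIcc ht) K.coe_nonneg)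
  convert key using 1
  · congr 1; ring
  · ring

lemma abs_sub_taylor_two_le (hf : ∀ t ∈ s, HasDerivWithinAt f (f' t) s t)
    (hf' : ∀ t ∈ s, HasDerivWithinAt f' (f'' t) s t) (hf'' : LipschitzOnWith K f'' s)
    (ha : a ∈ s) (hb : b ∈ s) :
    |f b - f a - f' a * (b - a) - f'' a / 2 * (b - a) ^ 2| ≤ K * |b - a| ^ 3 := by
  have hquad : ∀ t ∈ s, HasDerivWithinAt (fun t => f' a * (t - a) + f'' a / 2 * (t - a) ^ 2)
      (f' a + f'' a * (t - a)) s t := fun t _ => by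
    have hta : HasDerivWithinAt (fun t => t - a) 1 s t := (hasDerivWithinAt_id t s).sub_const a
    refine ((hta.const_mul (f' a)).add ((hta.pow 2).const_mul (f'' a / 2))).congr_deriv ?_
    push_cast
    ring
  have key := abs_sub_sub_sub_le_of_abs_deriv_sub_le (r := K * |b - a| ^ 2) hf hquad ha hb
    fun t ht => by
      have hts : t ∈ s := OrdConnected.uIcc_subset ‹_› ha hb ht
      rw [← sub_sub]
      refine (abs_sub_taylor_one_le hf' hf'' ha hts).trans ?_
      gcongr 1
      exact pow_le_pow_left₀ (abs_nonneg _) (abs_sub_left_of_mem_uIcc ht) 2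
  convert key using 1
  · congr 1; ring
  · ring

lemma exists_hasDerivWithinAt_eq_slope (hf : ∀ t ∈ s, HasDerivWithinAt f (f' t) s t) (ha : a ∈ s)
    (hb : b ∈ s) (hab : a < b) : ∃ ξ ∈ Ioo a b, f' ξ = (f b - f a) / (b - a) := by
  have hsub : Icc a b ⊆ s := OrdConnected.out ‹_› ha hb
  exact exists_hasDerivAt_eq_slope f f' hab
    (fun t ht => ((hf t (hsub ht)).mono hsub).continuousWithinAt)
    fun t ht => (hf t (hsub (Ioo_subset_Icc_self ht))).hasDerivAt
      (Filter.mem_of_superset (Icc_mem_nhds ht.1 ht.2) hsub)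

lemma abs_slope_sub_slope_le (hf : ∀ t ∈ s, HasDerivWithinAt f (f' t) s t)
    (hf' : LipschitzOnWith K f' s) (ha : a ∈ s) (hb : b ∈ s) (hp : p ∈ Icc a b) (hq : q ∈ Icc a b)
    (hpq : p < q) (hp' : p' ∈ Icc a b) (hq' : q' ∈ Icc a b) (hpq' : p' < q') :
    |(f q - f p) / (q - p) - (f q' - f p') / (q' - p')| ≤ K * (b - a) := by
  have hsub : Icc a b ⊆ s := OrdConnected.out ‹_› ha hb
  obtain ⟨ξ, hξ, hfξ⟩ := exists_hasDerivWithinAt_eq_slope hf (hsub hp) (hsub hq) hpq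
  obtain ⟨η, hη, hfη⟩ := exists_hasDerivWithinAt_eq_slope hf (hsub hp') (hsub hq') hpq'
  have hξab : ξ ∈ Icc a b := ⟨hp.1.trans hξ.1.le, hξ.2.le.trans hq.2⟩
  have hηab : η ∈ Icc a b := ⟨hp'.1.trans hη.1.le, hη.2.le.trans hq'.2⟩
  rw [← hfξ, ← hfη]
  exact (hf'.dist_le_mul ξ (hsub hξab) η (hsub hηab)).trans
    (mul_le_mul_of_nonneg_left (Real.dist_le_of_mem_Icc hξab hηab) K.coe_nonneg)

lemma abs_chord_sub_le (hf : ∀ t ∈ s, HasDerivWithinAt f (f' t) s t)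
    (hf' : LipschitzOnWith K f' s) (ha : a ∈ s) (hb : b ∈ s) (hc : c ∈ Icc a b) :
    |f a + (f b - f a) / (b - a) * (c - a) - f c| ≤ K * (b - a) ^ 2 := by
  obtain rfl | hac := hc.1.eq_or_lt
  · simpa using mul_nonneg K.coe_nonneg (sq_nonneg (b - a))
  have hab : a < b := hac.trans_le hc.2
  have hca : 0 < c - a := sub_pos.mpr hac
  have hslope := abs_slope_sub_slope_le hf hf' ha hb (left_mem_Icc.mpr hab.le)
    (right_mem_Icc.mpr hab.le) hab (left_mem_Icc.mpr hab.le) hc hac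
  calc
    _ = |((f b - f a) / (b - a) - (f c - f a) / (c - a)) * (c - a)| := by
      rw [sub_mul, div_mul_cancel₀ _ hca.ne']
      congr 1
      ring
    _ = |(f b - f a) / (b - a) - (f c - f a) / (c - a)| * (c - a) := by
      rw [abs_mul, abs_of_pos hca]
    _ ≤ K * (b - a) * (b - a) := by
      gcongr
      exact hc.2
    _ = K * (b - a) ^ 2 := by ring

end Taylor

section HermiteAccuracy

variable {f f' f'' : ℝ → ℝ} {s : Set ℝ} [s.OrdConnected] {a b d e t ε L : ℝ} {K : ℝ≥0}

lemma abs_hermite_sub_le_of_secant (hf : ∀ t ∈ s, HasDerivWithinAt f (f' t) s t)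
    (hf' : LipschitzOnWith K f' s) (ha : a ∈ s) (hb : b ∈ s) (hab : a < b) (ht : t ∈ Icc a b)
    (hd : |d - (f b - f a) / (b - a)| ≤ ε) (he : |e - (f b - f a) / (b - a)| ≤ ε) :
    |hermite a b (f a) (f b) d e t - f t| ≤ ε * (b - a) / 4 + K * (b - a) ^ 2 := by
  set m := (f b - f a) / (b - a) with hm
  have hchord : hermite a b (f a) (f b) m m t = f a + m * (t - a) := by
    simpa [two_mul, ← hm] using hermite_eq_quadratic a b (f a) (f b) m t
  calc
    _ ≤ |hermite a b (f a) (f b) d e t - hermite a b (f a) (f b) m m t|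
        + |hermite a b (f a) (f b) m m t - f t| := abs_sub_le _ _ _
    _ ≤ ε * (b - a) / 4 + K * (b - a) ^ 2 := by
      gcongr
      · exact abs_hermite_sub_hermite_le hab ht hd he
      · rw [hchord]
        exact abs_chord_sub_le hf hf' ha hb ht

lemma abs_two_mul_slope_sub_deriv_sub_deriv_le (hf : ∀ t ∈ s, HasDerivWithinAt f (f' t) s t)
    (hf' : ∀ t ∈ s, HasDerivWithinAt f' (f'' t) s t) (hf'' : LipschitzOnWith K f'' s)
    (ha : a ∈ s) (hb : b ∈ s) (hab : a < b) :
    |2 * ((f b - f a) / (b - a)) - f' a - f' b| ≤ 3 * K * (b - a) ^ 2 := by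
  have hba : 0 < b - a := sub_pos.mpr hab
  have hR := abs_sub_taylor_two_le hf hf' hf'' ha hb
  have hR' := abs_sub_taylor_one_le hf' hf'' ha hb
  rw [abs_of_pos hba] at hR hR'
  calc
    _ = |2 * (f b - f a - f' a * (b - a) - f'' a / 2 * (b - a) ^ 2) / (b - a)
        - (f' b - f' a - f'' a * (b - a))| := by
      congr 1
      field_simp
      ring
    _ ≤ 2 * |f b - f a - f' a * (b - a) - f'' a / 2 * (b - a) ^ 2| / (b - a)
        + |f' b - f' a - f'' a * (b - a)| := by
      refine (abs_sub _ _).trans_eq ?_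
      rw [abs_div, abs_mul, abs_of_pos hba, abs_two]
    _ ≤ 2 * (K * (b - a) ^ 3) / (b - a) + K * (b - a) ^ 2 := by gcongr
    _ = 3 * K * (b - a) ^ 2 := by
      field_simp
      ring

lemma abs_quadratic_sub_le (hf : ∀ t ∈ s, HasDerivWithinAt f (f' t) s t)
    (hf' : ∀ t ∈ s, HasDerivWithinAt f' (f'' t) s t) (hf'' : LipschitzOnWith K f'' s)
    (ha : a ∈ s) (hb : b ∈ s) (hab : a < b) (ht : t ∈ Icc a b) :
    |f a + f' a * (t - a) + ((f b - f a) / (b - a) - f' a) / (b - a) * (t - a) ^ 2 - f t|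
      ≤ 2 * K * (b - a) ^ 3 := by
  have hba : 0 < b - a := sub_pos.mpr hab
  have hta : 0 ≤ t - a := sub_nonneg.mpr ht.1
  have hRb := abs_sub_taylor_two_le hf hf' hf'' ha hb
  have hRt := abs_sub_taylor_two_le hf hf' hf'' ha (OrdConnected.out ‹_› ha hb ht)
  rw [abs_of_pos hba] at hRb
  rw [abs_of_nonneg hta] at hRt
  obtain ⟨_, hs1⟩ := sub_div_sub_mem_Icc_zero_one ht
  calc
    _ = |(f b - f a - f' a * (b - a) - f'' a / 2 * (b - a) ^ 2) * ((t - a) / (b - a)) ^ 2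
        - (f t - f a - f' a * (t - a) - f'' a / 2 * (t - a) ^ 2)| := by
      congr 1
      field_simp
      ring
    _ ≤ |f b - f a - f' a * (b - a) - f'' a / 2 * (b - a) ^ 2| * ((t - a) / (b - a)) ^ 2
        + |f t - f a - f' a * (t - a) - f'' a / 2 * (t - a) ^ 2| := by
      refine (abs_sub _ _).trans_eq ?_
      rw [abs_mul, abs_of_nonneg (sq_nonneg ((t - a) / (b - a)))]
    _ ≤ K * (b - a) ^ 3 * 1 ^ 2 + K * (b - a) ^ 3 := by
      gcongr
      refine hRt.trans ?_
      gcongr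
      exact ht.2
    _ = 2 * K * (b - a) ^ 3 := by ring

lemma abs_hermite_sub_le_of_deriv (hf : ∀ t ∈ s, HasDerivWithinAt f (f' t) s t)
    (hf' : ∀ t ∈ s, HasDerivWithinAt f' (f'' t) s t) (hf'' : LipschitzOnWith K f'' s)
    (ha : a ∈ s) (hb : b ∈ s) (hab : a < b) (ht : t ∈ Icc a b)
    (hd : |d - f' a| ≤ L * (b - a) ^ 2) (he : |e - f' b| ≤ L * (b - a) ^ 2) :
    |hermite a b (f a) (f b) d e t - f t| ≤ (L + 3 * K) * (b - a) ^ 3 := by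
  set m := (f b - f a) / (b - a)
  have hba : 0 < b - a := sub_pos.mpr hab
  have hL : 0 ≤ L * (b - a) ^ 2 := (abs_nonneg _).trans hd
  have he' : |e - (2 * m - f' a)| ≤ (L + 3 * K) * (b - a) ^ 2 := by
    have htrap := abs_two_mul_slope_sub_deriv_sub_deriv_le hf hf' hf'' ha hb hab
    calc
      _ = |(e - f' b) - (2 * m - f' a - f' b)| := by
        congr 1
        ring
      _ ≤ |e - f' b| + |2 * m - f' a - f' b| := abs_sub _ _
      _ ≤ (L + 3 * K) * (b - a) ^ 2 := by linarith
  have hd' : |d - f' a| ≤ (L + 3 * K) * (b - a) ^ 2 := by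
    refine hd.trans ?_
    gcongr
    exact le_add_of_nonneg_right (by positivity)
  calc
    _ ≤ |hermite a b (f a) (f b) d e t - hermite a b (f a) (f b) (f' a) (2 * m - f' a) t|
        + |hermite a b (f a) (f b) (f' a) (2 * m - f' a) t - f t| := abs_sub_le _ _ _
    _ ≤ (L + 3 * K) * (b - a) ^ 2 * (b - a) / 4 + 2 * K * (b - a) ^ 3 := by
      gcongr
      · exact abs_hermite_sub_hermite_le hab ht hd' he'
      · rw [hermite_eq_quadratic]
        exact abs_quadratic_sub_le hf hf' hf'' ha hb hab ht
    _ ≤ (L + 3 * K) * (b - a) ^ 3 := by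
      have hL3 := mul_nonneg hL hba.le
      have hK3 : 0 ≤ K * (b - a) ^ 3 := by positivity
      linarith

end HermiteAccuracy

/-- Brodlie's derivative value at the middle one of three consecutive nodes `a < b < c`, for data
sampled from a function `f`. -/
noncomputable def brodlieSlope (f : ℝ → ℝ) (a b c : ℝ) : ℝ :=
  brodlie (b - a) (c - b) ((f b - f a) / (b - a)) ((f c - f b) / (c - b))

section BrodlieSlope

variable {f f' f'' : ℝ → ℝ} {s : Set ℝ} [s.OrdConnected] {a b c d t h H δ : ℝ} {K L : ℝ≥0}

lemma slope_mem_of_mapsTo_deriv {C : Set ℝ} (hf : ∀ t ∈ s, HasDerivWithinAt f (f' t) s t)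
    (hC : MapsTo f' s C) (ha : a ∈ s) (hb : b ∈ s) (hab : a < b) :
    (f b - f a) / (b - a) ∈ C := by
  obtain ⟨ξ, hξ, hfξ⟩ := exists_hasDerivWithinAt_eq_slope hf ha hb hab
  exact hfξ ▸ hC (OrdConnected.out ‹_› ha hb (Ioo_subset_Icc_self hξ))

lemma abs_brodlieSlope_sub_slope_le (hf : ∀ t ∈ s, HasDerivWithinAt f (f' t) s t)
    (hpos : MapsTo f' s (Ioi 0)) (hf' : LipschitzOnWith K f' s) (ha : a ∈ s) (hc : c ∈ s)
    (hab : a < b) (hbc : b < c) :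
    |brodlieSlope f a b c - (f b - f a) / (b - a)| ≤ K * (c - a) ∧
      |brodlieSlope f a b c - (f c - f b) / (c - b)| ≤ K * (c - a) := by
  have ha' : a ∈ Icc a c := left_mem_Icc.mpr (hab.trans hbc).le
  have hc' : c ∈ Icc a c := right_mem_Icc.mpr (hab.trans hbc).le
  have hb' : b ∈ Icc a c := ⟨hab.le, hbc.le⟩
  have hb : b ∈ s := OrdConnected.out ‹_› ha hc hb'
  have hmem := brodlie_mem_uIcc (sub_pos.mpr hab) (sub_pos.mpr hbc)
    (slope_mem_of_mapsTo_deriv hf hpos ha hb hab) (slope_mem_of_mapsTo_deriv hf hpos hb hc hbc)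
  have hdiff := abs_slope_sub_slope_le hf hf' ha hc hb' hc' hbc ha' hb' hab
  refine ⟨(abs_sub_left_of_mem_uIcc hmem).trans hdiff, ?_⟩
  rw [abs_sub_comm]
  exact (abs_sub_right_of_mem_uIcc hmem).trans hdiff

theorem abs_hermite_brodlieSlope_sub_le_sq (hf : ∀ t ∈ s, HasDerivWithinAt f (f' t) s t)
    (hpos : MapsTo f' s (Ioi 0)) (hf' : LipschitzOnWith K f' s) (ha : a ∈ s) (hd : d ∈ s)
    (hab : a < b) (hbc : b < c) (hcd : c < d) (hab' : b - a ≤ H) (hbc' : c - b ≤ H)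
    (hcd' : d - c ≤ H) (ht : t ∈ Icc b c) :
    |hermite b c (f b) (f c) (brodlieSlope f a b c) (brodlieSlope f b c d) t - f t|
      ≤ 2 * K * H ^ 2 := by
  have hsub : Icc a d ⊆ s := OrdConnected.out ‹_› ha hd
  have hb : b ∈ s := hsub ⟨hab.le, (hbc.trans hcd).le⟩
  have hc : c ∈ s := hsub ⟨(hab.trans hbc).le, hcd.le⟩
  have hH : 0 < H := (sub_pos.mpr hbc).trans_le hbc'
  have hleft : |brodlieSlope f a b c - (f c - f b) / (c - b)| ≤ K * (2 * H) :=
    (abs_brodlieSlope_sub_slope_le hf hpos hf' ha hc hab hbc).2.trans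
      (mul_le_mul_of_nonneg_left (by linarith) K.coe_nonneg)
  have hright : |brodlieSlope f b c d - (f c - f b) / (c - b)| ≤ K * (2 * H) :=
    (abs_brodlieSlope_sub_slope_le hf hpos hf' hb hd hbc hcd).1.trans
      (mul_le_mul_of_nonneg_left (by linarith) K.coe_nonneg)
  calc
    _ ≤ K * (2 * H) * (c - b) / 4 + K * (c - b) ^ 2 :=
      abs_hermite_sub_le_of_secant hf hf' hb hc hbc ht hleft hright
    _ ≤ K * (2 * H) * H / 4 + K * H ^ 2 := by
      have : 0 < c - b := sub_pos.mpr hbc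
      gcongr
    _ ≤ 2 * K * H ^ 2 := by
      have : 0 ≤ K * H ^ 2 := by positivity
      linarith

lemma abs_avg_slope_sub_deriv_le (hf : ∀ t ∈ s, HasDerivWithinAt f (f' t) s t)
    (hf' : ∀ t ∈ s, HasDerivWithinAt f' (f'' t) s t) (hf'' : LipschitzOnWith K f'' s)
    (ha : a ∈ s) (hb : b ∈ s) (hc : c ∈ s) (hh : 0 < h) (hab : b - a = h) (hbc : c - b = h) :
    |((f b - f a) / h + (f c - f b) / h) / 2 - f' b| ≤ K * h ^ 2 := by
  have hRa := abs_sub_taylor_two_le hf hf' hf'' hb ha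
  have hRc := abs_sub_taylor_two_le hf hf' hf'' hb hc
  rw [← neg_sub b a, hab, abs_neg, abs_of_pos hh] at hRa
  rw [hbc, abs_of_pos hh] at hRc
  calc
    _ = |(f c - f b - f' b * h - f'' b / 2 * h ^ 2)
        - (f a - f b - f' b * -h - f'' b / 2 * (-h) ^ 2)| / (2 * h) := by
      rw [← abs_of_pos (mul_pos two_pos hh), ← abs_div]
      congr 1
      field_simp
      ring
    _ ≤ (K * h ^ 3 + K * h ^ 3) / (2 * h) := by
      gcongr
      exact (abs_sub _ _).trans (add_le_add hRc hRa)
    _ = K * h ^ 2 := by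
      field_simp
      ring

lemma abs_brodlieSlope_sub_deriv_le (hf : ∀ t ∈ s, HasDerivWithinAt f (f' t) s t)
    (hf' : ∀ t ∈ s, HasDerivWithinAt f' (f'' t) s t) (hδ : 0 < δ) (hδf : MapsTo f' s (Ici δ))
    (hK : LipschitzOnWith K f' s) (hL : LipschitzOnWith L f'' s) (ha : a ∈ s) (hc : c ∈ s)
    (hh : 0 < h) (hab : b - a = h) (hbc : c - b = h) :
    |brodlieSlope f a b c - f' b| ≤ (K ^ 2 / δ + L) * h ^ 2 := by
  have hac : a ≤ c := by linarith
  have hb' : b ∈ Icc a c := ⟨by linarith, by linarith⟩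
  have hb : b ∈ s := OrdConnected.out ‹_› ha hc hb'
  have hu : δ ≤ _ := slope_mem_of_mapsTo_deriv hf hδf ha hb (by linarith)
  have hv : δ ≤ _ := slope_mem_of_mapsTo_deriv hf hδf hb hc (by linarith)
  have huv := abs_slope_sub_slope_le hf hK ha hc (left_mem_Icc.mpr hac) hb' (by linarith) hb'
    (right_mem_Icc.mpr hac) (by linarith)
  have havg := abs_avg_slope_sub_deriv_le hf hf' hL ha hb hc hh hab hbc
  unfold brodlieSlope
  rw [hab] at hu huv ⊢
  rw [hbc] at hv huv ⊢
  set u := (f b - f a) / h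
  set v := (f c - f b) / h
  calc
    _ ≤ |brodlie h h u v - (u + v) / 2| + |(u + v) / 2 - f' b| := abs_sub_le _ _ _
    _ ≤ (u - v) ^ 2 / (4 * δ) + L * h ^ 2 :=
      add_le_add (abs_brodlie_self_sub_avg_le hh.ne' hδ hu hv) havg
    _ ≤ (K * (c - a)) ^ 2 / (4 * δ) + L * h ^ 2 := by
      rw [← sq_abs (u - v)]
      gcongr
    _ = (K ^ 2 / δ + L) * h ^ 2 := by
      rw [show c - a = 2 * h by linarith]
      field_simp
      ring

theorem abs_hermite_brodlieSlope_sub_le_cube (hf : ∀ t ∈ s, HasDerivWithinAt f (f' t) s t)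
    (hf' : ∀ t ∈ s, HasDerivWithinAt f' (f'' t) s t) (hδ : 0 < δ) (hδf : MapsTo f' s (Ici δ))
    (hK : LipschitzOnWith K f' s) (hL : LipschitzOnWith L f'' s) (ha : a ∈ s) (hd : d ∈ s)
    (hh : 0 < h) (hab : b - a = h) (hbc : c - b = h) (hcd : d - c = h) (ht : t ∈ Icc b c) :
    |hermite b c (f b) (f c) (brodlieSlope f a b c) (brodlieSlope f b c d) t - f t|
      ≤ (K ^ 2 / δ + 4 * L) * h ^ 3 := by
  have hsub : Icc a d ⊆ s := OrdConnected.out ‹_› ha hd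
  have hb : b ∈ s := hsub ⟨by linarith, by linarith⟩
  have hc : c ∈ s := hsub ⟨by linarith, by linarith⟩
  have hleft := abs_brodlieSlope_sub_deriv_le hf hf' hδ hδf hK hL ha hc hh hab hbc
  have hright := abs_brodlieSlope_sub_deriv_le hf hf' hδ hδf hK hL hb hd hh hbc hcd
  rw [← hbc] at hleft hright
  have key := abs_hermite_sub_le_of_deriv hf hf' hL hb hc (by linarith) ht hleft hright
  rw [hbc] at key
  linarith

end BrodlieSlope

section IteratedDeriv

variable {f : ℝ → ℝ} {s : Set ℝ} {n k : ℕ} {K : ℝ≥0}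

lemma hasDerivWithinAt_iteratedDerivWithin_s18 (hf : ContDiffOn ℝ n f s) (hs : UniqueDiffOn ℝ s)
    (hk : k < n) : ∀ t ∈ s,
      HasDerivWithinAt (iteratedDerivWithin k f s) (iteratedDerivWithin (k + 1) f s t) s t := by
  intro t ht
  rw [iteratedDerivWithin_succ]
  exact (hf.differentiableOn_iteratedDerivWithin (mod_cast hk) hs t ht).hasDerivWithinAt

lemma lipschitzOnWith_iteratedDerivWithin (hconv : Convex ℝ s) (hf : ContDiffOn ℝ n f s)
    (hs : UniqueDiffOn ℝ s) (hk : k < n) (hK : ∀ t ∈ s, |iteratedDerivWithin (k + 1) f s t| ≤ K) :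
    LipschitzOnWith K (iteratedDerivWithin k f s) s :=
  hconv.lipschitzOnWith_of_nnnorm_hasDerivWithin_le
    (hasDerivWithinAt_iteratedDerivWithin_s18 hf hs hk) hK

end IteratedDeriv

lemma strictMonoOn_Icc_one_of_lt_succ {n : ℕ} {x : ℕ → ℝ}
    (hx : ∀ i, 1 ≤ i → i ≤ n - 1 → x i < x (i + 1)) : StrictMonoOn x (Icc 1 n) :=
  strictMonoOn_of_lt_add_one ordConnected_Icc fun i _ hi hi' => hx i hi.1 (Nat.le_pred_of_lt hi'.2)

/-- `dy` holds Brodlie's derivative values at the interior nodes `x 2, …, x (n - 1)` of the data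
`(x 1, y 1), …, (x n, y n)`. -/
def IsBrodlieSlopes (n : ℕ) (x y dy : ℕ → ℝ) : Prop :=
  ∀ i, 2 ≤ i → i ≤ n - 1 →
    dy i = brodlie (x i - x (i - 1)) (x (i + 1) - x i)
      ((y i - y (i - 1)) / (x i - x (i - 1))) ((y (i + 1) - y i) / (x (i + 1) - x i))

namespace IsBrodlieSlopes

variable {n i : ℕ} {x y dy : ℕ → ℝ}

theorem pos_and_le_three_mul_min (hdy : IsBrodlieSlopes n x y dy)
    (hx : ∀ i, 1 ≤ i → i ≤ n - 1 → x i < x (i + 1))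
    (hm : ∀ i, 1 ≤ i → i ≤ n - 1 → 0 < (y (i + 1) - y i) / (x (i + 1) - x i))
    (hi : 2 ≤ i) (hin : i ≤ n - 1) :
    0 < dy i ∧ dy i ≤ 3 * min ((y i - y (i - 1)) / (x i - x (i - 1)))
      ((y (i + 1) - y i) / (x (i + 1) - x i)) := by
  obtain ⟨j, rfl⟩ := Nat.exists_eq_add_of_le' hi
  have hp := sub_pos.mpr (hx (j + 1) (by lia) (by lia))
  have hq := sub_pos.mpr (hx (j + 2) (by lia) hin)
  have hu := hm (j + 1) (by lia) (by lia)
  have hv := hm (j + 2) (by lia) hin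
  rw [hdy _ hi hin]
  exact ⟨brodlie_pos hp hq hu hv, brodlie_le_three_mul_min hp hq hu hv⟩

theorem monotoneOn_hermite (hdy : IsBrodlieSlopes n x y dy)
    (hx : ∀ i, 1 ≤ i → i ≤ n - 1 → x i < x (i + 1))
    (hm : ∀ i, 1 ≤ i → i ≤ n - 1 → 0 < (y (i + 1) - y i) / (x (i + 1) - x i))
    (hi : 2 ≤ i) (hin : i ≤ n - 2) :
    MonotoneOn (hermite (x i) (x (i + 1)) (y i) (y (i + 1)) (dy i) (dy (i + 1)))
      (Icc (x i) (x (i + 1))) := by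
  obtain ⟨hpos, hle⟩ := hdy.pos_and_le_three_mul_min hx hm hi (by lia)
  obtain ⟨hpos', hle'⟩ := hdy.pos_and_le_three_mul_min hx hm (i := i + 1) (by lia) (by lia)
  rw [mul_min_of_nonneg _ _ zero_le_three] at hle hle'
  exact _root_.monotoneOn_hermite (hx i (by lia) (by lia)) ⟨hpos.le, hle.trans (min_le_right _ _)⟩
    ⟨hpos'.le, hle'.trans (min_le_left _ _)⟩

variable {f : ℝ → ℝ} {t h H δ : ℝ} {K L : ℝ≥0}

theorem abs_hermite_sub_le_sq (hdf : IsBrodlieSlopes n x (f ∘ x) dy)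
    (hx : ∀ i, 1 ≤ i → i ≤ n - 1 → x i < x (i + 1))
    (hH : ∀ i, 1 ≤ i → i ≤ n - 1 → x (i + 1) - x i ≤ H)
    (hf : ContDiffOn ℝ 2 f (Icc (x 1) (x n)))
    (hpos : ∀ t ∈ Icc (x 1) (x n), 0 < derivWithin f (Icc (x 1) (x n)) t)
    (hK : ∀ t ∈ Icc (x 1) (x n), |iteratedDerivWithin 2 f (Icc (x 1) (x n)) t| ≤ K)
    (hi : 2 ≤ i) (hin : i ≤ n - 2) (ht : t ∈ Icc (x i) (x (i + 1))) :
    |hermite (x i) (x (i + 1)) (f (x i)) (f (x (i + 1))) (dy i) (dy (i + 1)) t - f t|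
      ≤ 2 * K * H ^ 2 := by
  have hmono := strictMonoOn_Icc_one_of_lt_succ hx
  have hmem := hmono.monotoneOn.mapsTo_Icc
  have hU := uniqueDiffOn_Icc (hmono ⟨le_rfl, by lia⟩ ⟨by lia, le_rfl⟩ (by lia : 1 < n))
  obtain ⟨j, rfl⟩ := Nat.exists_eq_add_of_le' hi
  rw [hdf _ hi (by lia), hdf (j + 2 + 1) (by lia) (by lia)]
  refine abs_hermite_brodlieSlope_sub_le_sq (f' := iteratedDerivWithin 1 f (Icc (x 1) (x n)))
    (hasDerivWithinAt_iteratedDerivWithin_s18 hf hU two_pos) (fun t ht => ?_)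
    (lipschitzOnWith_iteratedDerivWithin (convex_Icc _ _) hf hU one_lt_two hK)
    (hmem ⟨by lia, by lia⟩) (hmem ⟨by lia, by lia⟩) (hx (j + 1) (by lia) (by lia))
    (hx (j + 2) (by lia) (by lia)) (hx (j + 3) (by lia) (by lia)) (hH (j + 1) (by lia) (by lia))
    (hH (j + 2) (by lia) (by lia)) (hH (j + 3) (by lia) (by lia)) ht
  rw [iteratedDerivWithin_one]
  exact hpos t ht

theorem abs_hermite_sub_le_cube (hdf : IsBrodlieSlopes n x (f ∘ x) dy) (hδ : 0 < δ) (hh : 0 < h)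
    (hx : ∀ i, 1 ≤ i → i ≤ n - 1 → x (i + 1) - x i = h)
    (hf : ContDiffOn ℝ 3 f (Icc (x 1) (x n)))
    (hδf : ∀ t ∈ Icc (x 1) (x n), δ ≤ derivWithin f (Icc (x 1) (x n)) t)
    (hK : ∀ t ∈ Icc (x 1) (x n), |iteratedDerivWithin 2 f (Icc (x 1) (x n)) t| ≤ K)
    (hL : ∀ t ∈ Icc (x 1) (x n), |iteratedDerivWithin 3 f (Icc (x 1) (x n)) t| ≤ L)
    (hi : 2 ≤ i) (hin : i ≤ n - 2) (ht : t ∈ Icc (x i) (x (i + 1))) :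
    |hermite (x i) (x (i + 1)) (f (x i)) (f (x (i + 1))) (dy i) (dy (i + 1)) t - f t|
      ≤ (K ^ 2 / δ + 4 * L) * h ^ 3 := by
  have hmono := strictMonoOn_Icc_one_of_lt_succ fun i hi hin =>
    sub_pos.mp (hh.trans_eq (hx i hi hin).symm)
  have hmem := hmono.monotoneOn.mapsTo_Icc
  have hU := uniqueDiffOn_Icc (hmono ⟨le_rfl, by lia⟩ ⟨by lia, le_rfl⟩ (by lia : 1 < n))
  obtain ⟨j, rfl⟩ := Nat.exists_eq_add_of_le' hi
  rw [hdf _ hi (by lia), hdf (j + 2 + 1) (by lia) (by lia)]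
  refine abs_hermite_brodlieSlope_sub_le_cube (f' := iteratedDerivWithin 1 f (Icc (x 1) (x n)))
    (hasDerivWithinAt_iteratedDerivWithin_s18 hf hU three_pos)
    (hasDerivWithinAt_iteratedDerivWithin_s18 hf hU (by lia)) hδ (fun t ht => ?_)
    (lipschitzOnWith_iteratedDerivWithin (convex_Icc _ _) hf hU (by lia) hK)
    (lipschitzOnWith_iteratedDerivWithin (convex_Icc _ _) hf hU (by lia) hL)
    (hmem ⟨by lia, by lia⟩) (hmem ⟨by lia, by lia⟩) hh (hx (j + 1) (by lia) (by lia))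
    (hx (j + 2) (by lia) (by lia)) (hx (j + 3) (by lia) (by lia)) ht
  rw [iteratedDerivWithin_one]
  exact hδf t ht

end IsBrodlieSlopes

/-- (a) Brodlie's values satisfy `0 < ḟᵢ^B ≤ 3·min(mᵢ₋₁, mᵢ)` for increasing
data, so the resulting cubic Hermite interpolant is monotone;
(b) for data sampled from `f ∈ C³` with `f' ≥ δ > 0` the resulting piecewise
cubic Hermite interpolant is third-order accurate on uniform grids and
second-order accurate on non-uniform grids. -/
theorem brodlie_monotone_and_accuracy :
    (∀ (n : ℕ) (x f df : ℕ → ℝ), 4 ≤ n →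
      (∀ i, 1 ≤ i → i ≤ n - 1 → x i < x (i + 1)) →
      (∀ i, 1 ≤ i → i ≤ n - 1 → f i ≤ f (i + 1)) →
      (∀ i, 1 ≤ i → i ≤ n - 1 → 0 < (f (i + 1) - f i) / (x (i + 1) - x i)) →
      (∀ i, 2 ≤ i → i ≤ n - 1 →
        df i = brodlie (x i - x (i - 1)) (x (i + 1) - x i)
          ((f i - f (i - 1)) / (x i - x (i - 1)))
          ((f (i + 1) - f i) / (x (i + 1) - x i))) →
      ((∀ i, 2 ≤ i → i ≤ n - 1 →
          0 < df i ∧ df i ≤ 3 * min ((f i - f (i - 1)) / (x i - x (i - 1)))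
            ((f (i + 1) - f i) / (x (i + 1) - x i))) ∧
        (∀ i, 2 ≤ i → i ≤ n - 2 →
          MonotoneOn (hermite (x i) (x (i + 1)) (f i) (f (i + 1)) (df i) (df (i + 1)))
            (Set.Icc (x i) (x (i + 1)))))) ∧
    (∀ δ M : ℝ, 0 < δ → 0 ≤ M →
      ∃ C > 0, ∀ (n : ℕ) (x : ℕ → ℝ) (f : ℝ → ℝ) (h hhat : ℝ) (df : ℕ → ℝ),
        4 ≤ n →
        (∀ i, 1 ≤ i → i ≤ n - 1 → x i < x (i + 1)) →
        (∀ i, 1 ≤ i → i ≤ n - 1 → x (i + 1) - x i ≤ hhat) →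
        (∃ i, 1 ≤ i ∧ i ≤ n - 1 ∧ hhat = x (i + 1) - x i) →
        ContDiffOn ℝ 3 f (Set.Icc (x 1) (x n)) →
        (∀ t ∈ Set.Icc (x 1) (x n), δ ≤ derivWithin f (Set.Icc (x 1) (x n)) t) →
        (∀ t ∈ Set.Icc (x 1) (x n),
          |iteratedDerivWithin 2 f (Set.Icc (x 1) (x n)) t| ≤ M) →
        (∀ t ∈ Set.Icc (x 1) (x n),
          |iteratedDerivWithin 3 f (Set.Icc (x 1) (x n)) t| ≤ M) →
        (∀ i, 2 ≤ i → i ≤ n - 1 →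
          df i = brodlie (x i - x (i - 1)) (x (i + 1) - x i)
            ((f (x i) - f (x (i - 1))) / (x i - x (i - 1)))
            ((f (x (i + 1)) - f (x i)) / (x (i + 1) - x i))) →
        ((∀ i, 2 ≤ i → i ≤ n - 2 → ∀ t ∈ Set.Icc (x i) (x (i + 1)),
            |hermite (x i) (x (i + 1)) (f (x i)) (f (x (i + 1))) (df i) (df (i + 1)) t
              - f t| ≤ C * hhat ^ 2) ∧
          ((∀ i, 1 ≤ i → i ≤ n - 1 → x (i + 1) - x i = h) →
            ∀ i, 2 ≤ i → i ≤ n - 2 → ∀ t ∈ Set.Icc (x i) (x (i + 1)),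
              |hermite (x i) (x (i + 1)) (f (x i)) (f (x (i + 1))) (df i) (df (i + 1)) t
                - f t| ≤ C * h ^ 3))) := by
  refine ⟨fun n x f df _ hx _ hm hdf => ?_, fun δ M hδ hM => ?_⟩
  · have hdf : IsBrodlieSlopes n x f df := hdf
    exact ⟨fun i => hdf.pos_and_le_three_mul_min hx hm, fun i => hdf.monotoneOn_hermite hx hm⟩
  · lift M to ℝ≥0 using hM
    refine ⟨1 + 4 * M + M ^ 2 / δ, by positivity,
      fun n x f h hhat df _ hx hhat_le _ hf hδf hM₂ hM₃ hdf => ?_⟩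
    have hdf : IsBrodlieSlopes n x (f ∘ x) df := hdf
    have := M.coe_nonneg
    have : 0 ≤ (M : ℝ) ^ 2 / δ := by positivity
    refine ⟨fun i hi hin t ht => ?_, fun hu i hi hin t ht => ?_⟩
    · exact (hdf.abs_hermite_sub_le_sq hx hhat_le (hf.of_le (by norm_num))
        (fun t ht => hδ.trans_le (hδf t ht)) hM₂ hi hin ht).trans
        (mul_le_mul_of_nonneg_right (by linarith) (by positivity))
    · have hh : 0 < h := hu i (by lia) (by lia) ▸ sub_pos.mpr (hx i (by lia) (by lia))
      exact (hdf.abs_hermite_sub_le_cube hδ hh hu hf hδf hM₂ hM₃ hi hin ht).trans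
        (mul_le_mul_of_nonneg_right (by linarith) (by positivity))
end
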